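/- arXiv:2407.03777 — 2 statements merged into one kernel-verified Lean document; each statement's English description precedes it below -/
import Mathlib

section
/- For every choice of constants α > 0, T > 0 and C₁ > 0 there exists a constant C > 0 with the following property. For every abstract FEM setting (H, V, ‖·‖_h, a_h) with ellipticity constant α, every h > 0, every linear map E : V → H with ‖E v‖ ≤ C₁ h² ‖v‖_h for all v ∈ V, every continuously differentiable g : [0,T] → H, every twice continuously differentiable ρ : [0,T] → H, and every twice continuously differentiable θ : [0,T] → V with θ(0) = 0, θ'(0) = 0 and (θ''(t), v) + a_h(θ(t), v) = (g(t), E v) − (ρ''(t), v) for all v ∈ V and t ∈ [0,T], one has for every τ ∈ [0,T]: ‖θ(τ)‖² ≤ C ( h⁴ ( sup_{s ∈ [0,T]} ‖g(s)‖² + ∫₀ᵀ ‖g'(s)‖² ds ) + ‖ρ'(0)‖² + ∫₀ᵀ ‖ρ'(s)‖² ds + ∫₀ᵀ ‖ρ''(s)‖² ds ). -/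
open scoped RealInnerProductSpace

/-!
The equation is integrated once in time and then tested with `θ` itself. With `G = ∫₀ᵗ g`,
`R = ∫₀ᵗ ρ''` and `Φ = ∫₀ᵗ θ` this reads `(θ', θ) + a_h(Φ, Φ') = (G, E Φ') - (R, θ)`, so that
`(‖θ‖² + a_h(Φ, Φ)) / 2 - (G, E Φ)` has derivative `-(g, E Φ) - (R, θ)`. Since
`‖E Φ‖² ≤ C₁² h⁴ α⁻¹ a_h(Φ, Φ)`, at a maximum point of the energy `‖θ‖² + a_h(Φ, Φ)` every term is
at most a constant times the square root of that maximum, and one factor cancels. This is the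
time-reversed form of testing with `∫_t^τ θ`.

As `V` need not be complete and `θ` is only smooth in the norm of `H`, the integral `Φ` is taken in
the completion of `V` for `a_h`, where `θ` is continuous by the equation itself.
-/

open Set MeasureTheory intervalIntegral

universe u

section Calculus

theorem sq_norm_le_iSup_of_continuousOn {X F : Type*} [TopologicalSpace X]
    [SeminormedAddCommGroup F] {K : Set X} {f : X → F} (hK : IsCompact K) (hf : ContinuousOn f K)
    {x : X} (hx : x ∈ K) : ‖f x‖ ^ 2 ≤ ⨆ y : K, ‖f y‖ ^ 2 := by
  have hbdd : BddAbove (range fun y : K => ‖f y‖ ^ 2) := by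
    rw [← image_eq_range (fun y => ‖f y‖ ^ 2)]
    exact hK.bddAbove_image (hf.norm.pow 2)
  exact le_ciSup hbdd ⟨x, hx⟩

variable {E : Type*} [NormedAddCommGroup E] [NormedSpace ℝ E] {a b : ℝ}

theorem hasDerivWithinAt_integral_of_continuousOn_Icc [CompleteSpace E] {f : ℝ → E}
    (hf : ContinuousOn f (Icc a b)) {t : ℝ} (ht : t ∈ Icc a b) :
    HasDerivWithinAt (fun x => ∫ s in a..x, f s) (f t) (Icc a b) t := by
  have : Fact (t ∈ Icc a b) := ⟨ht⟩
  have hint : IntervalIntegrable f volume a t :=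
    (hf.mono (Icc_subset_Icc_right ht.2)).intervalIntegrable_of_Icc ht.1
  exact integral_hasDerivWithinAt_right hint
    (hf.stronglyMeasurableAtFilter_nhdsWithin measurableSet_Icc t) (hf t ht)

theorem norm_integral_le_integral_norm_Icc {f : ℝ → E} (hf : ContinuousOn f (Icc a b)) {t : ℝ}
    (ht : t ∈ Icc a b) : ‖∫ s in a..t, f s‖ ≤ ∫ s in a..b, ‖f s‖ :=
  (intervalIntegral.norm_integral_le_integral_norm ht.1).trans <|
    integral_mono_interval le_rfl ht.1 ht.2 (.of_forall fun _ => norm_nonneg _)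
      (hf.norm.intervalIntegrable_of_Icc (ht.1.trans ht.2))

theorem sq_integral_le_mul_integral_sq {f : ℝ → ℝ} (hab : a ≤ b) (hf : ContinuousOn f (Icc a b)) :
    (∫ s in a..b, f s) ^ 2 ≤ (b - a) * ∫ s in a..b, f s ^ 2 := by
  rcases hab.eq_or_lt with rfl | hlt
  · simp
  have jensen : (⨍ s in a..b, f s) ^ 2 ≤ ⨍ s in a..b, f s ^ 2 := by
    rw [uIoc_of_le hab]
    exact even_two.convexOn_pow.map_set_average_le (by fun_prop) isClosed_univ
      (by simp [hlt]) (by simp) (by simp)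
      (hf.integrableOn_Icc.mono_set Ioc_subset_Icc_self)
      ((hf.pow 2).integrableOn_Icc.mono_set Ioc_subset_Icc_self)
  have hpos : 0 < b - a := sub_pos.2 hlt
  rw [interval_average_eq_div, interval_average_eq_div, div_pow, div_le_div_iff₀ (by positivity)
    hpos] at jensen
  exact le_of_mul_le_mul_right (by linarith) hpos

theorem hasDerivWithinAt_inner_const {K : Type*} [NormedAddCommGroup K] [InnerProductSpace ℝ K]
    {f : ℝ → K} {f' : K} {s : Set ℝ} {t : ℝ} (hf : HasDerivWithinAt f f' s t) (k : K) :
    HasDerivWithinAt (fun x => ⟪f x, k⟫) ⟪f', k⟫ s t := by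
  simpa using hf.inner ℝ (hasDerivWithinAt_const t s k)

end Calculus

theorem exists_completion_of_posSemidef {V : Type u} [AddCommGroup V] [Module ℝ V]
    {a : V →ₗ[ℝ] V →ₗ[ℝ] ℝ} (ha : a.IsPosSemidef) :
    ∃ (W : Type u) (_ : NormedAddCommGroup W) (_ : InnerProductSpace ℝ W) (_ : CompleteSpace W)
      (ι : V →ₗ[ℝ] W), DenseRange ι ∧ ∀ x y, ⟪ι x, ι y⟫ = a x y := by
  let core : PreInnerProductSpace.Core ℝ V :=
    { inner := fun x y => a x y
      conj_inner_symm := fun x y => ha.isSymm.eq y x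
      re_inner_nonneg := ha.isNonneg.nonneg
      add_left := fun x y z => by simp
      smul_left := fun x y r => by simp }
  let := InnerProductSpace.Core.toSeminormedAddCommGroup (c := core)
  let := InnerProductSpace.ofCore core
  exact ⟨UniformSpace.Completion V, inferInstance, inferInstance, inferInstance,
    (UniformSpace.Completion.toComplL (𝕜 := ℝ) (E := V)).toLinearMap,
    UniformSpace.Completion.denseRange_coe, UniformSpace.Completion.inner_coe⟩

section InnerProductSpaces

variable {H W : Type*} [NormedAddCommGroup H] [InnerProductSpace ℝ H]
  [NormedAddCommGroup W] [InnerProductSpace ℝ W]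

section Energy

variable {F : W →L[ℝ] H} {T M N : ℝ} {u u' g G R : ℝ → H} {φ Φ : ℝ → W}

theorem hasDerivWithinAt_energy_sub_inner {s : Set ℝ} {t : ℝ}
    (hu : HasDerivWithinAt u (u' t) s t) (hΦ : HasDerivWithinAt Φ (φ t) s t)
    (hG : HasDerivWithinAt G (g t) s t)
    (htest : ⟪u' t, u t⟫ + ⟪Φ t, φ t⟫ = ⟪G t, F (φ t)⟫ - ⟪R t, u t⟫) :
    HasDerivWithinAt (fun x => (‖u x‖ ^ 2 + ‖Φ x‖ ^ 2) / 2 - ⟪G x, F (Φ x)⟫)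
      (-(⟪g t, F (Φ t)⟫ + ⟪R t, u t⟫)) s t := by
  have hFΦ : HasDerivWithinAt (fun x => F (Φ x)) (F (φ t)) s t :=
    F.hasFDerivAt.comp_hasDerivWithinAt t hΦ
  refine (((hu.norm_sq.add hΦ.norm_sq).div_const 2).sub (hG.inner ℝ hFΦ)).congr_deriv ?_
  rw [real_inner_comm] at htest
  linarith

theorem energy_le_mul_of_norm_le (hu : ∀ t ∈ Icc 0 T, HasDerivWithinAt u (u' t) (Icc 0 T) t)
    (hΦ : ∀ t ∈ Icc 0 T, HasDerivWithinAt Φ (φ t) (Icc 0 T) t)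
    (hG : ∀ t ∈ Icc 0 T, HasDerivWithinAt G (g t) (Icc 0 T) t)
    (hu₀ : u 0 = 0) (hΦ₀ : Φ 0 = 0) (hG₀ : G 0 = 0)
    (hgM : ∀ t ∈ Icc 0 T, ‖g t‖ ≤ M) (hRN : ∀ t ∈ Icc 0 T, ‖R t‖ ≤ N)
    (htest : ∀ t ∈ Icc 0 T, ⟪u' t, u t⟫ + ⟪Φ t, φ t⟫ = ⟪G t, F (φ t)⟫ - ⟪R t, u t⟫)
    {S : ℝ} (huS : ∀ t ∈ Icc 0 T, ‖u t‖ ≤ S) (hΦS : ∀ t ∈ Icc 0 T, ‖Φ t‖ ≤ S)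
    {τ : ℝ} (hτ : τ ∈ Icc 0 T) :
    ‖u τ‖ ^ 2 + ‖Φ τ‖ ^ 2 ≤ (4 * T * ‖F‖ * M + 2 * T * N) * S := by
  have hM : 0 ≤ M := (norm_nonneg _).trans (hgM τ hτ)
  have hN : 0 ≤ N := (norm_nonneg _).trans (hRN τ hτ)
  have hS : 0 ≤ S := (norm_nonneg _).trans (huS τ hτ)
  have hFΦ : ∀ t ∈ Icc 0 T, ‖F (Φ t)‖ ≤ ‖F‖ * S := fun t ht => F.le_opNorm_of_le (hΦS t ht)
  have hGτ : ‖G τ‖ ≤ M * T := by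
    have hdiff := norm_image_sub_le_of_norm_deriv_le_segment' hG
      (fun t ht => hgM t (Ico_subset_Icc_self ht)) τ hτ
    rw [hG₀, sub_zero, sub_zero] at hdiff
    exact hdiff.trans (by gcongr; exact hτ.2)
  have hrate : ∀ t ∈ Icc 0 T,
      ‖-(⟪g t, F (Φ t)⟫ + ⟪R t, u t⟫)‖ ≤ M * (‖F‖ * S) + N * S := fun t ht => by
    rw [norm_neg]
    refine norm_add_le_of_le ?_ ?_
    · exact (norm_inner_le_norm _ _).trans (by gcongr; exacts [hgM t ht, hFΦ t ht])
    · exact (norm_inner_le_norm _ _).trans (by gcongr; exacts [hRN t ht, huS t ht])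
  have hgrowth : (‖u τ‖ ^ 2 + ‖Φ τ‖ ^ 2) / 2 - ⟪G τ, F (Φ τ)⟫ ≤ (M * (‖F‖ * S) + N * S) * T := by
    have hdiff := norm_image_sub_le_of_norm_deriv_le_segment'
      (fun t ht => hasDerivWithinAt_energy_sub_inner (hu t ht) (hΦ t ht) (hG t ht) (htest t ht))
      (fun t ht => hrate t (Ico_subset_Icc_self ht)) τ hτ
    simp only [hu₀, hΦ₀, hG₀, norm_zero, inner_zero_left, sub_zero, add_zero, zero_div,
      zero_pow two_ne_zero] at hdiff
    exact (le_abs_self _).trans (hdiff.trans (by gcongr; exact hτ.2))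
  have hinner : ⟪G τ, F (Φ τ)⟫ ≤ M * T * (‖F‖ * S) :=
    (real_inner_le_norm _ _).trans (by gcongr; exacts [(norm_nonneg _).trans hGτ, hFΦ τ hτ])
  linarith

theorem norm_le_of_energy_identity (hu : ∀ t ∈ Icc 0 T, HasDerivWithinAt u (u' t) (Icc 0 T) t)
    (hΦ : ∀ t ∈ Icc 0 T, HasDerivWithinAt Φ (φ t) (Icc 0 T) t)
    (hG : ∀ t ∈ Icc 0 T, HasDerivWithinAt G (g t) (Icc 0 T) t)
    (hu₀ : u 0 = 0) (hΦ₀ : Φ 0 = 0) (hG₀ : G 0 = 0)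
    (hgM : ∀ t ∈ Icc 0 T, ‖g t‖ ≤ M) (hRN : ∀ t ∈ Icc 0 T, ‖R t‖ ≤ N)
    (htest : ∀ t ∈ Icc 0 T, ⟪u' t, u t⟫ + ⟪Φ t, φ t⟫ = ⟪G t, F (φ t)⟫ - ⟪R t, u t⟫)
    {τ : ℝ} (hτ : τ ∈ Icc 0 T) : ‖u τ‖ ≤ 4 * T * ‖F‖ * M + 2 * T * N := by
  have hT : 0 ≤ T := hτ.1.trans hτ.2
  have hM : 0 ≤ M := (norm_nonneg _).trans (hgM τ hτ)
  have hN : 0 ≤ N := (norm_nonneg _).trans (hRN τ hτ)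
  have hcont : ContinuousOn (fun t => ‖u t‖ ^ 2 + ‖Φ t‖ ^ 2) (Icc 0 T) :=
    ((HasDerivWithinAt.continuousOn hu).norm.pow 2).add
      ((HasDerivWithinAt.continuousOn hΦ).norm.pow 2)
  obtain ⟨m, hm, hmax⟩ := isCompact_Icc.exists_isMaxOn ⟨τ, hτ⟩ hcont
  set S := √(‖u m‖ ^ 2 + ‖Φ m‖ ^ 2) with hS
  have huS : ∀ t ∈ Icc 0 T, ‖u t‖ ≤ S := fun t ht =>
    Real.le_sqrt_of_sq_le ((le_add_of_nonneg_right (sq_nonneg _)).trans (hmax ht))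
  have hΦS : ∀ t ∈ Icc 0 T, ‖Φ t‖ ≤ S := fun t ht =>
    Real.le_sqrt_of_sq_le ((le_add_of_nonneg_left (sq_nonneg _)).trans (hmax ht))
  have hself : S * S ≤ (4 * T * ‖F‖ * M + 2 * T * N) * S := by
    rw [hS, Real.mul_self_sqrt (by positivity), ← hS]
    exact energy_le_mul_of_norm_le hu hΦ hG hu₀ hΦ₀ hG₀ hgM hRN htest huS hΦS hm
  refine (huS τ hτ).trans ?_
  rcases (Real.sqrt_nonneg _ : 0 ≤ S).eq_or_lt with hzero | hpos
  · exact hzero.symm.le.trans (by positivity)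
  · exact le_of_mul_le_mul_right hself hpos

end Energy

section WeakSolution

variable {V : Type*} [AddCommGroup V] [Module ℝ V] {j : V →ₗ[ℝ] H} {ι : V →ₗ[ℝ] W}
  {F : W →L[ℝ] H} {T : ℝ} {θ : ℝ → V} {u' u'' g r : ℝ → H}

theorem norm_sq_le_of_eq_inner_sub_inner {w : W} {f g z : H}
    (hw : ‖w‖ ^ 2 = ⟪g, F w⟫ - ⟪f, z⟫) : ‖w‖ ^ 2 ≤ ‖F‖ ^ 2 * ‖g‖ ^ 2 + 2 * (‖f‖ * ‖z‖) := by
  have hgF : ⟪g, F w⟫ ≤ ‖g‖ * (‖F‖ * ‖w‖) :=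
    (real_inner_le_norm _ _).trans (by gcongr; exact F.le_opNorm w)
  have hfz : -(‖f‖ * ‖z‖) ≤ ⟪f, z⟫ := neg_le_of_abs_le (abs_real_inner_le_norm f z)
  have young : 2 * (‖F‖ * ‖g‖) * ‖w‖ ≤ (‖F‖ * ‖g‖) ^ 2 + ‖w‖ ^ 2 := two_mul_le_add_sq _ _
  linarith

theorem continuousOn_of_weak_equation {X : Type*} [TopologicalSpace X] {s : Set X} {θ : X → V}
    {f g : X → H} (hθ : ContinuousOn (fun t => j (θ t)) s) (hf : ContinuousOn f s)
    (hg : ContinuousOn g s)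
    (heq : ∀ t ∈ s, ∀ v, ⟪ι (θ t), ι v⟫ = ⟪g t, F (ι v)⟫ - ⟪f t, j v⟫) :
    ContinuousOn (fun t => ι (θ t)) s := by
  intro x hx
  have hsq : ∀ t ∈ s, ‖ι (θ t) - ι (θ x)‖ ^ 2 =
      ⟪g t - g x, F (ι (θ t) - ι (θ x))⟫ - ⟪f t - f x, j (θ t) - j (θ x)⟫ := fun t ht => by
    rw [← real_inner_self_eq_norm_sq, inner_sub_left, inner_sub_left (g t), inner_sub_left (f t),
      ← map_sub ι, ← map_sub j, heq t ht, heq x hx]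
    ring
  have hlim : ContinuousOn (fun t => √(‖F‖ ^ 2 * ‖g t - g x‖ ^ 2 +
      2 * (‖f t - f x‖ * ‖j (θ t) - j (θ x)‖))) s :=
    ((continuousOn_const.mul ((hg.sub continuousOn_const).norm.pow 2)).add (continuousOn_const.mul
      ((hf.sub continuousOn_const).norm.mul (hθ.sub continuousOn_const).norm))).sqrt
  refine tendsto_iff_norm_sub_tendsto_zero.2 (squeeze_zero' (.of_forall fun _ => norm_nonneg _)
    ?_ (by simpa using (hlim x hx).tendsto))
  filter_upwards [self_mem_nhdsWithin] with t ht using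
    Real.le_sqrt_of_sq_le (norm_sq_le_of_eq_inner_sub_inner (hsq t ht))

theorem weak_equation_integral [CompleteSpace H] [CompleteSpace W]
    (hu' : ∀ t ∈ Icc 0 T, HasDerivWithinAt u' (u'' t) (Icc 0 T) t) (hu'₀ : u' 0 = 0)
    (hθ : ContinuousOn (fun t => ι (θ t)) (Icc 0 T)) (hg : ContinuousOn g (Icc 0 T))
    (hr : ContinuousOn r (Icc 0 T))
    (heq : ∀ t ∈ Icc 0 T, ∀ v,
      ⟪u'' t, j v⟫ + ⟪ι (θ t), ι v⟫ = ⟪g t, F (ι v)⟫ - ⟪r t, j v⟫)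
    {t : ℝ} (ht : t ∈ Icc 0 T) (v : V) :
    ⟪u' t, j v⟫ + ⟪∫ s in 0..t, ι (θ s), ι v⟫ =
      ⟪∫ s in 0..t, g s, F (ι v)⟫ - ⟪∫ s in 0..t, r s, j v⟫ := by
  have hderiv : ∀ x ∈ Icc 0 T, HasDerivWithinAt (fun x => ⟪u' x, j v⟫ +
      ⟪∫ s in 0..x, ι (θ s), ι v⟫ - (⟪∫ s in 0..x, g s, F (ι v)⟫ - ⟪∫ s in 0..x, r s, j v⟫))
      0 (Icc 0 T) x := fun x hx => by
    have hu'v := hasDerivWithinAt_inner_const (hu' x hx) (j v)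
    have hΦv := hasDerivWithinAt_inner_const
      (hasDerivWithinAt_integral_of_continuousOn_Icc hθ hx) (ι v)
    have hGv := hasDerivWithinAt_inner_const
      (hasDerivWithinAt_integral_of_continuousOn_Icc hg hx) (F (ι v))
    have hRv := hasDerivWithinAt_inner_const
      (hasDerivWithinAt_integral_of_continuousOn_Icc hr hx) (j v)
    refine ((hu'v.add hΦv).sub (hGv.sub hRv)).congr_deriv ?_
    rw [heq x hx v, sub_self]
  have hzero := norm_image_sub_le_of_norm_deriv_le_segment' hderiv (fun _ _ => norm_zero.le) t ht
  simpa [hu'₀, sub_eq_zero] using hzero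

theorem norm_sq_le_of_weak_wave_equation [CompleteSpace H] [CompleteSpace W]
    (hu : ∀ t ∈ Icc 0 T, HasDerivWithinAt (fun t => j (θ t)) (u' t) (Icc 0 T) t)
    (hu' : ∀ t ∈ Icc 0 T, HasDerivWithinAt u' (u'' t) (Icc 0 T) t)
    (hu'' : ContinuousOn u'' (Icc 0 T)) (hu₀ : j (θ 0) = 0) (hu'₀ : u' 0 = 0)
    (hg : ContinuousOn g (Icc 0 T)) (hr : ContinuousOn r (Icc 0 T))
    (heq : ∀ t ∈ Icc 0 T, ∀ v,
      ⟪u'' t, j v⟫ + ⟪ι (θ t), ι v⟫ = ⟪g t, F (ι v)⟫ - ⟪r t, j v⟫)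
    {τ : ℝ} (hτ : τ ∈ Icc 0 T) :
    ‖j (θ τ)‖ ^ 2 ≤ 32 * T ^ 2 * ‖F‖ ^ 2 * (⨆ s : Icc 0 T, ‖g s‖ ^ 2) +
      8 * T ^ 3 * ∫ s in 0..T, ‖r s‖ ^ 2 := by
  set M := ⨆ s : Icc 0 T, ‖g s‖ ^ 2
  have hgM : ∀ t ∈ Icc 0 T, ‖g t‖ ≤ √M := fun t ht =>
    Real.le_sqrt_of_sq_le (sq_norm_le_iSup_of_continuousOn isCompact_Icc hg ht)
  have hθ : ContinuousOn (fun t => ι (θ t)) (Icc 0 T) :=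
    continuousOn_of_weak_equation (HasDerivWithinAt.continuousOn hu) (hu''.add hr) hg
      fun t ht v => by rw [Pi.add_apply, inner_add_left]; linarith [heq t ht v]
  have hbound : ‖j (θ τ)‖ ≤ 4 * T * ‖F‖ * √M + 2 * T * ∫ s in 0..T, ‖r s‖ :=
    norm_le_of_energy_identity hu
      (fun t ht => hasDerivWithinAt_integral_of_continuousOn_Icc hθ ht)
      (fun t ht => hasDerivWithinAt_integral_of_continuousOn_Icc hg ht)
      hu₀ integral_same integral_same hgM (fun t ht => norm_integral_le_integral_norm_Icc hr ht)
      (fun t ht => weak_equation_integral hu' hu'₀ hθ hg hr heq ht (θ t)) hτ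
  calc ‖j (θ τ)‖ ^ 2
      ≤ (4 * T * ‖F‖ * √M + 2 * T * ∫ s in 0..T, ‖r s‖) ^ 2 := by gcongr
    _ ≤ 2 * ((4 * T * ‖F‖ * √M) ^ 2 + (2 * T * ∫ s in 0..T, ‖r s‖) ^ 2) := add_sq_le
    _ = 32 * T ^ 2 * ‖F‖ ^ 2 * M + 8 * T ^ 2 * (∫ s in 0..T, ‖r s‖) ^ 2 := by
        rw [mul_pow _ √M, Real.sq_sqrt (Real.iSup_nonneg fun _ => sq_nonneg _)]
        ring
    _ ≤ 32 * T ^ 2 * ‖F‖ ^ 2 * M + 8 * T ^ 2 * ((T - 0) * ∫ s in 0..T, ‖r s‖ ^ 2) := by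
        gcongr
        exact sq_integral_le_mul_integral_sq (hτ.1.trans hτ.2) hr.norm
    _ = 32 * T ^ 2 * ‖F‖ ^ 2 * M + 8 * T ^ 3 * ∫ s in 0..T, ‖r s‖ ^ 2 := by ring

end WeakSolution

theorem semidiscrete_L2_error_general [CompleteSpace H] {V : Type*} [AddCommGroup V] [Module ℝ V]
    (j : V →ₗ[ℝ] H) (Nh : Seminorm ℝ V) (a : V →ₗ[ℝ] V →ₗ[ℝ] ℝ) {α T C₁ h : ℝ} (hα : 0 < α)
    (ha : ∀ w v, a w v = a v w) (hell : ∀ w, α * Nh w ^ 2 ≤ a w w)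
    (E : V →ₗ[ℝ] H) (hE : ∀ v, ‖E v‖ ≤ C₁ * h ^ 2 * Nh v) {g r : ℝ → H}
    (hg : ContinuousOn g (Icc 0 T)) (hr : ContinuousOn r (Icc 0 T))
    {θ : ℝ → V} {u' u'' : ℝ → H}
    (hu : ∀ t ∈ Icc 0 T, HasDerivWithinAt (fun t => j (θ t)) (u' t) (Icc 0 T) t)
    (hu' : ∀ t ∈ Icc 0 T, HasDerivWithinAt u' (u'' t) (Icc 0 T) t)
    (hu'' : ContinuousOn u'' (Icc 0 T)) (hu₀ : j (θ 0) = 0) (hu'₀ : u' 0 = 0)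
    (heq : ∀ t ∈ Icc 0 T, ∀ v, ⟪u'' t, j v⟫ + a (θ t) v = ⟪g t, E v⟫ - ⟪r t, j v⟫)
    {τ : ℝ} (hτ : τ ∈ Icc 0 T) :
    ‖j (θ τ)‖ ^ 2 ≤ (32 * T ^ 2 * C₁ ^ 2 / α + 8 * T ^ 3) *
      (h ^ 4 * (⨆ s : Icc 0 T, ‖g s‖ ^ 2) + ∫ s in 0..T, ‖r s‖ ^ 2) := by
  have hT : 0 ≤ T := hτ.1.trans hτ.2
  set M := ⨆ s : Icc 0 T, ‖g s‖ ^ 2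
  set Q := ∫ s in 0..T, ‖r s‖ ^ 2
  have hM : 0 ≤ M := Real.iSup_nonneg fun s => sq_nonneg _
  have hQ : 0 ≤ Q := integral_nonneg hT fun _ _ => sq_nonneg _
  have hpos : a.IsPosSemidef := ⟨⟨ha⟩, ⟨fun w => le_trans (by positivity) (hell w)⟩⟩
  obtain ⟨W, _, _, _, ι, hι, hinner⟩ := exists_completion_of_posSemidef hpos
  have hEι : ∀ v, ‖E v‖ ≤ √(C₁ ^ 2 * h ^ 4 / α) * ‖ι v‖ := fun v => by
    rw [norm_eq_sqrt_real_inner (ι v), hinner, ← Real.sqrt_mul (by positivity)]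
    refine Real.le_sqrt_of_sq_le ?_
    calc ‖E v‖ ^ 2 ≤ (C₁ * h ^ 2 * Nh v) ^ 2 := by gcongr; exact hE v
      _ = C₁ ^ 2 * h ^ 4 / α * (α * Nh v ^ 2) := by field_simp
      _ ≤ C₁ ^ 2 * h ^ 4 / α * a v v := by gcongr; exact hell v
  have hF : ‖E.extendOfNorm ι‖ ^ 2 ≤ C₁ ^ 2 * h ^ 4 / α :=
    (Real.le_sqrt (norm_nonneg _) (by positivity)).1
      (LinearMap.opNorm_extendOfNorm_le hι (Real.sqrt_nonneg _) hEι)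
  calc ‖j (θ τ)‖ ^ 2
      ≤ 32 * T ^ 2 * ‖E.extendOfNorm ι‖ ^ 2 * M + 8 * T ^ 3 * Q :=
        norm_sq_le_of_weak_wave_equation hu hu' hu'' hu₀ hu'₀ hg hr (fun t ht v => by
          rw [hinner, LinearMap.extendOfNorm_eq hι ⟨_, hEι⟩, heq t ht v]) hτ
    _ ≤ 32 * T ^ 2 * (C₁ ^ 2 * h ^ 4 / α) * M + 8 * T ^ 3 * Q := by gcongr
    _ = 32 * T ^ 2 * C₁ ^ 2 / α * (h ^ 4 * M) + 8 * T ^ 3 * Q := by ring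
    _ ≤ 32 * T ^ 2 * C₁ ^ 2 / α * (h ^ 4 * M + Q) + 8 * T ^ 3 * (h ^ 4 * M + Q) := by
        gcongr
        · exact le_add_of_nonneg_right hQ
        · exact le_add_of_nonneg_left (by positivity)
    _ = (32 * T ^ 2 * C₁ ^ 2 / α + 8 * T ^ 3) * (h ^ 4 * M + Q) := by ring

end InnerProductSpaces

/-- L²-norm error estimate for the semidiscrete approximation. -/
theorem semidiscrete_L2_error (α T C₁ : ℝ) (hα : 0 < α) (hT : 0 < T) (hC₁ : 0 < C₁) :
    ∃ C > 0,
      ∀ (H : Type) [NormedAddCommGroup H] [InnerProductSpace ℝ H] [CompleteSpace H]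
        (V : Submodule ℝ H) (Nh : Seminorm ℝ V) (a : V →ₗ[ℝ] V →ₗ[ℝ] ℝ),
        (∀ w v : V, a w v = a v w) →
        (∀ w : V, α * Nh w ^ 2 ≤ a w w) →
        ∀ (h : ℝ), 0 < h →
          ∀ (E : V →ₗ[ℝ] H), (∀ v : V, ‖E v‖ ≤ C₁ * h ^ 2 * Nh v) →
            ∀ (g g' : ℝ → H),
              (∀ t ∈ Set.Icc (0 : ℝ) T, HasDerivWithinAt g (g' t) (Set.Icc (0 : ℝ) T) t) →
              ContinuousOn g' (Set.Icc (0 : ℝ) T) →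
              ∀ (ρ ρ' ρ'' : ℝ → H),
                (∀ t ∈ Set.Icc (0 : ℝ) T,
                  HasDerivWithinAt ρ (ρ' t) (Set.Icc (0 : ℝ) T) t) →
                (∀ t ∈ Set.Icc (0 : ℝ) T,
                  HasDerivWithinAt ρ' (ρ'' t) (Set.Icc (0 : ℝ) T) t) →
                ContinuousOn ρ'' (Set.Icc (0 : ℝ) T) →
                ∀ (θ θ' θ'' : ℝ → V),
                  (∀ t ∈ Set.Icc (0 : ℝ) T,
                    HasDerivWithinAt θ (θ' t) (Set.Icc (0 : ℝ) T) t) →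
                  (∀ t ∈ Set.Icc (0 : ℝ) T,
                    HasDerivWithinAt θ' (θ'' t) (Set.Icc (0 : ℝ) T) t) →
                  ContinuousOn θ'' (Set.Icc (0 : ℝ) T) →
                  θ 0 = 0 → θ' 0 = 0 →
                  (∀ t ∈ Set.Icc (0 : ℝ) T, ∀ v : V,
                    ⟪((θ'' t : V) : H), (v : H)⟫ + a (θ t) v
                      = ⟪g t, E v⟫ - ⟪ρ'' t, (v : H)⟫) →
                  ∀ τ ∈ Set.Icc (0 : ℝ) T,
                    ‖θ τ‖ ^ 2
                      ≤ C * (h ^ 4 * ((⨆ s : Set.Icc (0 : ℝ) T, ‖g ↑s‖ ^ 2)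
                              + ∫ s in (0 : ℝ)..T, ‖g' s‖ ^ 2)
                          + ‖ρ' 0‖ ^ 2 + (∫ s in (0 : ℝ)..T, ‖ρ' s‖ ^ 2)
                          + ∫ s in (0 : ℝ)..T, ‖ρ'' s‖ ^ 2) := by
  refine ⟨32 * T ^ 2 * C₁ ^ 2 / α + 8 * T ^ 3, by positivity, ?_⟩
  intro H _ _ _ V Nh a ha hell h _ E hE g g' hg _ ρ ρ' ρ'' _ _ hρ'' θ θ' θ'' hθ hθ' hθ'' hθ₀ hθ'₀
    heq τ hτ
  have hcoe : ∀ {f : ℝ → V} {f' : V} {t : ℝ}, HasDerivWithinAt f f' (Icc 0 T) t →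
      HasDerivWithinAt (fun x => (f x : H)) (f' : H) (Icc 0 T) t :=
    fun hf => V.subtypeL.hasFDerivAt.comp_hasDerivWithinAt _ hf
  refine (semidiscrete_L2_error_general V.subtype Nh a hα ha hell E hE
    (HasDerivWithinAt.continuousOn hg) hρ'' (fun t ht => hcoe (hθ t ht))
    (fun t ht => hcoe (hθ' t ht)) (continuous_subtype_val.comp_continuousOn hθ'')
    (by simp [hθ₀]) (by simp [hθ'₀]) heq hτ).trans ?_
  have hnonneg : ∀ f : ℝ → H, 0 ≤ ∫ s in (0 : ℝ)..T, ‖f s‖ ^ 2 :=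
    fun f => integral_nonneg hT.le fun _ _ => sq_nonneg _
  gcongr
  linarith [mul_nonneg (by positivity : 0 ≤ h ^ 4) (hnonneg g'), hnonneg ρ', sq_nonneg ‖ρ' 0‖]
end

section
/- For every choice of constants 0 < α ≤ β, T > 0 and C₁ > 0 there exists a constant C > 0 with the following property. For every abstract FEM setting (H, V, ‖·‖_h, a_h) with constants α, β, every h > 0 and C_inv > 0 satisfying the inverse inequality ‖v‖_h ≤ C_inv h⁻² ‖v‖ for all v ∈ V, every linear map E : V → H with ‖E v‖ ≤ C₁ h² ‖v‖_h for all v ∈ V, every N ∈ ℕ with N ≥ 2 and time step k := T/N satisfying the CFL condition k ≤ β^{−1/2} C_inv^{−1} h², every continuously differentiable g : [0,T] → H, every σ¹, …, σ^{N−1} ∈ H, and every ζ⁰, …, ζᴺ ∈ V satisfying ((ζ^{n+1} − 2ζⁿ + ζ^{n−1})/k², v) + a_h(ζⁿ, v) = (g(nk), E v) + (σⁿ, v) for all v ∈ V and n = 1, …, N−1, one has for every 1 ≤ m ≤ N−1: ‖(ζ^{m+1} − ζ^m)/k‖² + ‖(ζ^{m+1} + ζ^m)/2‖_h² ≤ C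 ( ‖(ζ¹ − ζ⁰)/k‖² + ‖(ζ¹ + ζ⁰)/2‖_h² + h⁴ ( sup_{s ∈ [0,T]} ‖g(s)‖² + ∫₀ᵀ ‖g'(s)‖² ds ) + k Σ_{n=1}^{N−1} ‖σⁿ‖² ). -/
open scoped RealInnerProductSpace

/-!
Testing the scheme at step `n` with `ζⁿ⁺¹ - ζⁿ⁻¹` telescopes the leapfrog energy
`‖(ζⁿ⁺¹ - ζⁿ) / k‖² + a(ζⁿ⁺¹, ζⁿ)`, which the CFL condition makes equivalent to the error measure.
The smoother term `(g(nk), E v)` is controlled only by `‖v‖_h`, not by `‖v‖`, so in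
`∑ (g(nk), E (ζⁿ⁺¹ - ζⁿ⁻¹))` the difference has to be moved onto `g` by Abel summation; the
increments of `g` sum to at most `∫ ‖g'‖`. At a step `j` where the error measure attains its
maximum `Y²`, this gives `c Y² ≤ c' X₀ + 2 Y R` with `X₀` the initial measure and `R` an
`L¹`-in-time norm of the data, and a single application of Young's inequality concludes.
-/

section RealInequalities

lemma sq_le_of_mul_sq_le_add_two_mul {c y A R : ℝ} (hc : 0 < c)
    (h : c * y ^ 2 ≤ A + 2 * (y * R)) : y ^ 2 ≤ 2 / c * (A + 2 / c * R ^ 2) := by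
  have young : 2 * (y * R) ≤ c / 2 * y ^ 2 + 2 / c * R ^ 2 := by
    have := two_mul_le_add_mul_sq (a := y) (b := R) (half_pos hc)
    rwa [inv_div, mul_assoc] at this
  calc y ^ 2 = 2 / c * (c / 2 * y ^ 2) := by field_simp
    _ ≤ 2 / c * (A + 2 / c * R ^ 2) := by gcongr; linarith

lemma le_iSup_subtype_of_continuousOn {X : Type*} [TopologicalSpace X] {K : Set X} {f : X → ℝ}
    (hK : IsCompact K) (hf : ContinuousOn f K) {x : X} (hx : x ∈ K) : f x ≤ ⨆ y : K, f y := by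
  refine le_ciSup (f := K.domRestrict f) ?_ ⟨x, hx⟩
  rw [Set.range_domRestrict]
  exact hK.bddAbove_image hf

lemma sq_intervalIntegral_le {f : ℝ → ℝ} {a b : ℝ} (hab : a ≤ b)
    (hf : IntervalIntegrable f MeasureTheory.volume a b)
    (hf_sq : IntervalIntegrable (fun s => f s ^ 2) MeasureTheory.volume a b) :
    (∫ s in a..b, f s) ^ 2 ≤ (b - a) * ∫ s in a..b, f s ^ 2 := by
  have quadratic_nonneg (x : ℝ) :
      0 ≤ (b - a) * (x * x) + (2 * ∫ s in a..b, f s) * x + ∫ s in a..b, f s ^ 2 := by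
    calc 0 ≤ ∫ s in a..b, (f s + x) ^ 2 :=
          intervalIntegral.integral_nonneg hab fun _ _ => sq_nonneg _
      _ = ∫ s in a..b, (f s ^ 2 + 2 * x * f s + x ^ 2) := by
          congr 1 with s; ring
      _ = _ := by
          rw [intervalIntegral.integral_add (hf_sq.add (hf.const_mul _)) intervalIntegrable_const,
            intervalIntegral.integral_add hf_sq (hf.const_mul _),
            intervalIntegral.integral_const_mul, intervalIntegral.integral_const, smul_eq_mul]
          ring
  have discrim_nonpos := discrim_le_zero quadratic_nonneg
  rw [discrim] at discrim_nonpos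
  linarith

end RealInequalities

section Increments

variable {F : Type*} [NormedAddCommGroup F] [NormedSpace ℝ F] {g g' : ℝ → F} {a b : ℝ}

lemma norm_sub_le_integral_norm_of_hasDerivWithinAt (hab : a ≤ b)
    (hg : ∀ t ∈ Set.Icc a b, HasDerivWithinAt g (g' t) (Set.Icc a b) t)
    (hg' : ContinuousOn g' (Set.Icc a b)) : ‖g b - g a‖ ≤ ∫ s in a..b, ‖g' s‖ := by
  have hasDerivAt {t : ℝ} (ht : t ∈ Set.Ioo a b) : HasDerivAt g (g' t) t :=
    (hg t (Set.Ioo_subset_Icc_self ht)).hasDerivAt (Icc_mem_nhds ht.1 ht.2)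
  refine norm_sub_le_integral_of_norm_deriv_le_of_le hab
    (fun t ht => (hg t ht).continuousWithinAt)
    (fun t ht => (hasDerivAt ht).differentiableAt.differentiableWithinAt)
    (.of_forall fun t ht => by rw [(hasDerivAt ht).deriv]) ?_
  exact hg'.norm.intervalIntegrable_of_Icc hab

lemma sum_norm_sub_le_integral_norm
    (hg : ∀ t ∈ Set.Icc a b, HasDerivWithinAt g (g' t) (Set.Icc a b) t)
    (hg' : ContinuousOn g' (Set.Icc a b)) {t : ℕ → ℝ} (ht : Monotone t) {M : ℕ}
    (ha : a ≤ t 0) (hb : t M ≤ b) :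
    ∑ n ∈ Finset.range M, ‖g (t (n + 1)) - g (t n)‖ ≤ ∫ s in a..b, ‖g' s‖ := by
  have step_subset {n : ℕ} (hn : n < M) : Set.Icc (t n) (t (n + 1)) ⊆ Set.Icc a b :=
    Set.Icc_subset_Icc (ha.trans (ht n.zero_le)) ((ht hn).trans hb)
  have increment_le (n : ℕ) (hn : n < M) :
      ‖g (t (n + 1)) - g (t n)‖ ≤ ∫ s in t n..t (n + 1), ‖g' s‖ :=
    norm_sub_le_integral_norm_of_hasDerivWithinAt (ht n.le_succ)
      (fun s hs => (hg s (step_subset hn hs)).mono (step_subset hn)) (hg'.mono (step_subset hn))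
  calc ∑ n ∈ Finset.range M, ‖g (t (n + 1)) - g (t n)‖
      ≤ ∑ n ∈ Finset.range M, ∫ s in t n..t (n + 1), ‖g' s‖ :=
        Finset.sum_le_sum fun n hn => increment_le n (Finset.mem_range.1 hn)
    _ = ∫ s in t 0..t M, ‖g' s‖ :=
        intervalIntegral.sum_integral_adjacent_intervals fun n hn =>
          (hg'.mono (step_subset hn)).norm.intervalIntegrable_of_Icc (ht n.le_succ)
    _ ≤ ∫ s in a..b, ‖g' s‖ :=
        intervalIntegral.integral_mono_interval ha (ht M.zero_le) hb
          (.of_forall fun _ => norm_nonneg _)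
          (hg'.norm.intervalIntegrable_of_Icc (ha.trans ((ht M.zero_le).trans hb)))

lemma sq_sum_norm_sub_le (hg : ∀ t ∈ Set.Icc a b, HasDerivWithinAt g (g' t) (Set.Icc a b) t)
    (hg' : ContinuousOn g' (Set.Icc a b)) {t : ℕ → ℝ} (ht : Monotone t) {M : ℕ}
    (ha : a ≤ t 0) (hb : t M ≤ b) :
    (∑ n ∈ Finset.range M, ‖g (t (n + 1)) - g (t n)‖) ^ 2 ≤ (b - a) * ∫ s in a..b, ‖g' s‖ ^ 2 := by
  have hab : a ≤ b := ha.trans ((ht M.zero_le).trans hb)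
  calc (∑ n ∈ Finset.range M, ‖g (t (n + 1)) - g (t n)‖) ^ 2 ≤ (∫ s in a..b, ‖g' s‖) ^ 2 := by
        gcongr
        exact sum_norm_sub_le_integral_norm hg hg' ht ha hb
    _ ≤ (b - a) * ∫ s in a..b, ‖g' s‖ ^ 2 :=
        sq_intervalIntegral_le hab (hg'.norm.intervalIntegrable_of_Icc hab)
          ((hg'.norm.pow 2).intervalIntegrable_of_Icc hab)

end Increments

section Leapfrog

variable {V : Type*} [NormedAddCommGroup V] [InnerProductSpace ℝ V]

/-- The difference quotient `(ζⁿ⁺¹ - ζⁿ) / k`, the discrete velocity on the `n`-th time step. -/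
noncomputable def stepVelocity (k : ℝ) (ζ : ℕ → V) (n : ℕ) : V := k⁻¹ • (ζ (n + 1) - ζ n)

/-- The average `(ζⁿ⁺¹ + ζⁿ) / 2` over the `n`-th time step. -/
noncomputable def stepMidpoint (ζ : ℕ → V) (n : ℕ) : V := (1 / 2 : ℝ) • (ζ (n + 1) + ζ n)

/-- The quantity `‖(ζⁿ⁺¹ - ζⁿ) / k‖² + p ((ζⁿ⁺¹ + ζⁿ) / 2)²` in which errors are measured; `p` plays
the role of `‖·‖_h`. -/
noncomputable def errorNormSq (p : Seminorm ℝ V) (k : ℝ) (ζ : ℕ → V) (n : ℕ) : ℝ :=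
  ‖stepVelocity k ζ n‖ ^ 2 + p (stepMidpoint ζ n) ^ 2

/-- The energy conserved by the homogeneous explicit scheme. It is not nonnegative in general, only
under a CFL condition. -/
noncomputable def leapfrogEnergy (a : V →ₗ[ℝ] V →ₗ[ℝ] ℝ) (k : ℝ) (ζ : ℕ → V) (n : ℕ) : ℝ :=
  ‖stepVelocity k ζ n‖ ^ 2 + a (ζ (n + 1)) (ζ n)

/-- `ζ⁰, …, ζᴹ⁺¹` solve the explicit scheme with load functionals `F¹, …, Fᴹ`. The step centred at
time index `n + 1` is indexed by `n`, so that no subtraction of indices occurs. -/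
def IsLeapfrogSolution (a : V →ₗ[ℝ] V →ₗ[ℝ] ℝ) (k : ℝ) (F : ℕ → V →ₗ[ℝ] ℝ) (M : ℕ)
    (ζ : ℕ → V) : Prop :=
  ∀ n < M, ∀ v : V,
    ⟪(k ^ 2)⁻¹ • (ζ (n + 2) - (2 : ℝ) • ζ (n + 1) + ζ n), v⟫ + a (ζ (n + 1)) v = F (n + 1) v

variable {a : V →ₗ[ℝ] V →ₗ[ℝ] ℝ} {p : Seminorm ℝ V} {k α β : ℝ} {ζ : ℕ → V}

lemma errorNormSq_nonneg (p : Seminorm ℝ V) (k : ℝ) (ζ : ℕ → V) (n : ℕ) :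
    0 ≤ errorNormSq p k ζ n := by
  rw [errorNormSq]
  positivity

lemma sub_eq_two_smul_stepMidpoint_sub (ζ : ℕ → V) (n : ℕ) :
    ζ (n + 2) - ζ n = (2 : ℝ) • (stepMidpoint ζ (n + 1) - stepMidpoint ζ n) := by
  simp only [stepMidpoint]
  module

lemma sub_eq_smul_stepVelocity_add (hk : k ≠ 0) (ζ : ℕ → V) (n : ℕ) :
    ζ (n + 2) - ζ n = k • (stepVelocity k ζ (n + 1) + stepVelocity k ζ n) := by
  simp only [stepVelocity]
  rw [← smul_add, smul_inv_smul₀ hk]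
  abel

lemma leapfrogEnergy_eq (ha : ∀ w v, a w v = a v w) (hk : k ≠ 0) (n : ℕ) :
    leapfrogEnergy a k ζ n = ‖stepVelocity k ζ n‖ ^ 2 + a (stepMidpoint ζ n) (stepMidpoint ζ n)
      - k ^ 2 / 4 * a (stepVelocity k ζ n) (stepVelocity k ζ n) := by
  simp only [leapfrogEnergy, stepMidpoint, stepVelocity, map_add, map_sub, map_smul,
    LinearMap.add_apply, LinearMap.sub_apply, LinearMap.smul_apply, smul_eq_mul]
  rw [ha (ζ n) (ζ (n + 1))]
  field_simp
  ring

lemma leapfrogEnergy_succ_sub (ha : ∀ w v, a w v = a v w) (k : ℝ) (ζ : ℕ → V) (n : ℕ) :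
    leapfrogEnergy a k ζ (n + 1) - leapfrogEnergy a k ζ n
      = ⟪(k ^ 2)⁻¹ • (ζ (n + 2) - (2 : ℝ) • ζ (n + 1) + ζ n), ζ (n + 2) - ζ n⟫
        + a (ζ (n + 1)) (ζ (n + 2) - ζ n) := by
  simp only [leapfrogEnergy, stepVelocity, ← real_inner_self_eq_norm_sq, inner_add_left,
    inner_sub_left, inner_sub_right, real_inner_smul_left, real_inner_smul_right, map_sub]
  rw [ha (ζ (n + 1 + 1)) (ζ (n + 1)), real_inner_comm (ζ (n + 1)) (ζ (n + 2)),
    real_inner_comm (ζ n) (ζ (n + 1)), real_inner_comm (ζ n) (ζ (n + 2))]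
  ring

lemma sq_mul_le_norm_sq_of_inverse_inequality (hk : 0 ≤ k) (hβ : 0 ≤ β)
    (ha_bdd : ∀ w v, |a w v| ≤ β * p w * p v) {κ : ℝ} (hκ : ∀ v, p v ≤ κ * ‖v‖)
    (hκk : (k * √β * κ) ^ 2 ≤ 1) (v : V) : k ^ 2 * a v v ≤ ‖v‖ ^ 2 := by
  calc k ^ 2 * a v v ≤ k ^ 2 * (β * p v * p v) := by
        gcongr; exact (le_abs_self _).trans (ha_bdd v v)
    _ = (k * √β * p v) ^ 2 := by rw [mul_pow, mul_pow, Real.sq_sqrt hβ]; ring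
    _ ≤ (k * √β * (κ * ‖v‖)) ^ 2 := by gcongr; exact hκ v
    _ = (k * √β * κ) ^ 2 * ‖v‖ ^ 2 := by ring
    _ ≤ ‖v‖ ^ 2 := mul_le_of_le_one_left (sq_nonneg _) hκk

lemma min_mul_errorNormSq_le_leapfrogEnergy (ha : ∀ w v, a w v = a v w) (hk : k ≠ 0)
    (ha_coercive : ∀ w, α * p w ^ 2 ≤ a w w) (hcfl : ∀ v, k ^ 2 * a v v ≤ ‖v‖ ^ 2) (n : ℕ) :
    min (3 / 4) α * errorNormSq p k ζ n ≤ leapfrogEnergy a k ζ n := by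
  have velocity_le :
      min (3 / 4) α * ‖stepVelocity k ζ n‖ ^ 2 ≤ 3 / 4 * ‖stepVelocity k ζ n‖ ^ 2 := by
    gcongr; exact min_le_left _ _
  have midpoint_le : min (3 / 4) α * p (stepMidpoint ζ n) ^ 2 ≤ α * p (stepMidpoint ζ n) ^ 2 := by
    gcongr; exact min_le_right _ _
  rw [leapfrogEnergy_eq ha hk, errorNormSq]
  linarith [ha_coercive (stepMidpoint ζ n), hcfl (stepVelocity k ζ n)]

lemma leapfrogEnergy_le_max_mul_errorNormSq (ha : ∀ w v, a w v = a v w) (hk : k ≠ 0)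
    (ha_nonneg : ∀ w, 0 ≤ a w w) (ha_bdd : ∀ w v, |a w v| ≤ β * p w * p v) (n : ℕ) :
    leapfrogEnergy a k ζ n ≤ max 1 β * errorNormSq p k ζ n := by
  have correction_nonneg : 0 ≤ k ^ 2 / 4 * a (stepVelocity k ζ n) (stepVelocity k ζ n) :=
    mul_nonneg (by positivity) (ha_nonneg _)
  have velocity_le : 1 * ‖stepVelocity k ζ n‖ ^ 2 ≤ max 1 β * ‖stepVelocity k ζ n‖ ^ 2 := by
    gcongr; exact le_max_left _ _
  have midpoint_le : β * p (stepMidpoint ζ n) ^ 2 ≤ max 1 β * p (stepMidpoint ζ n) ^ 2 := by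
    gcongr; exact le_max_right _ _
  have form_le := (le_abs_self _).trans (ha_bdd (stepMidpoint ζ n) (stepMidpoint ζ n))
  rw [leapfrogEnergy_eq ha hk, errorNormSq]
  linarith

lemma IsLeapfrogSolution.leapfrogEnergy_eq_add_sum {F : ℕ → V →ₗ[ℝ] ℝ} {M j : ℕ}
    (hζ : IsLeapfrogSolution a k F M ζ) (ha : ∀ w v, a w v = a v w) (hj : j ≤ M) :
    leapfrogEnergy a k ζ j
      = leapfrogEnergy a k ζ 0 + ∑ n ∈ Finset.range j, F (n + 1) (ζ (n + 2) - ζ n) := by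
  rw [← sub_eq_iff_eq_add', ← Finset.sum_range_sub]
  refine Finset.sum_congr rfl fun n hn => ?_
  rw [leapfrogEnergy_succ_sub ha, hζ n ((Finset.mem_range.1 hn).trans_le hj)]

lemma sum_apply_sub_by_parts (ℓ : ℕ → V →ₗ[ℝ] ℝ) (ζ : ℕ → V) (j : ℕ) :
    ∑ n ∈ Finset.range j, ℓ (n + 1) (ζ (n + 2) - ζ n)
      = 2 * (ℓ j (stepMidpoint ζ j) - ℓ 0 (stepMidpoint ζ 0)
          - ∑ n ∈ Finset.range j, (ℓ (n + 1) - ℓ n) (stepMidpoint ζ n)) := by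
  rw [← Finset.sum_range_sub fun n => ℓ n (stepMidpoint ζ n), ← Finset.sum_sub_distrib,
    Finset.mul_sum]
  refine Finset.sum_congr rfl fun n _ => ?_
  rw [sub_eq_two_smul_stepMidpoint_sub, map_smul, map_sub, LinearMap.sub_apply, smul_eq_mul]
  ring

lemma sum_apply_sub_le_of_seminorm_bound {ℓ : ℕ → V →ₗ[ℝ] ℝ} {L Y : ℝ} {D : ℕ → ℝ} {j M : ℕ}
    (hj : j ≤ M) (hL : 0 ≤ L) (hD : ∀ n, 0 ≤ D n)
    (hℓ : ∀ n ≤ M, ∀ v, |ℓ n v| ≤ L * p v)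
    (hℓ_sub : ∀ n < M, ∀ v, |(ℓ (n + 1) - ℓ n) v| ≤ D n * p v)
    (hY : ∀ n ≤ M, p (stepMidpoint ζ n) ≤ Y) :
    ∑ n ∈ Finset.range j, ℓ (n + 1) (ζ (n + 2) - ζ n)
      ≤ 2 * (Y * (2 * L + ∑ n ∈ Finset.range M, D n)) := by
  have hY_nonneg : 0 ≤ Y := (apply_nonneg p _).trans (hY 0 M.zero_le)
  have load_le {n : ℕ} (hn : n ≤ M) : |ℓ n (stepMidpoint ζ n)| ≤ L * Y :=
    (hℓ n hn _).trans (by gcongr; exact hY n hn)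
  have increments_le :
      |∑ n ∈ Finset.range j, (ℓ (n + 1) - ℓ n) (stepMidpoint ζ n)|
        ≤ (∑ n ∈ Finset.range M, D n) * Y := by
    calc |∑ n ∈ Finset.range j, (ℓ (n + 1) - ℓ n) (stepMidpoint ζ n)|
        ≤ ∑ n ∈ Finset.range j, |(ℓ (n + 1) - ℓ n) (stepMidpoint ζ n)| :=
          Finset.abs_sum_le_sum_abs _ _
      _ ≤ ∑ n ∈ Finset.range j, D n * Y := by
          refine Finset.sum_le_sum fun n hn => ?_
          have hnM : n < M := (Finset.mem_range.1 hn).trans_le hj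
          exact (hℓ_sub n hnM _).trans (mul_le_mul_of_nonneg_left (hY n hnM.le) (hD n))
      _ ≤ ∑ n ∈ Finset.range M, D n * Y :=
          Finset.sum_le_sum_of_subset_of_nonneg (Finset.range_mono hj)
            fun n _ _ => mul_nonneg (hD n) hY_nonneg
      _ = (∑ n ∈ Finset.range M, D n) * Y := (Finset.sum_mul _ _ _).symm
  rw [sum_apply_sub_by_parts]
  linarith [(abs_le.1 (load_le hj)).2, (abs_le.1 (load_le M.zero_le)).1,
    (abs_le.1 increments_le).1]

lemma sum_apply_sub_le_of_norm_bound {r : ℕ → V →ₗ[ℝ] ℝ} {Y : ℝ} {ρ : ℕ → ℝ} {j M : ℕ}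
    (hk : 0 < k) (hj : j ≤ M) (hρ : ∀ n, 0 ≤ ρ n)
    (hr : ∀ n < M, ∀ v, |r (n + 1) v| ≤ ρ (n + 1) * ‖v‖)
    (hY : ∀ n ≤ M, ‖stepVelocity k ζ n‖ ≤ Y) :
    ∑ n ∈ Finset.range j, r (n + 1) (ζ (n + 2) - ζ n)
      ≤ 2 * (Y * (k * ∑ n ∈ Finset.range M, ρ (n + 1))) := by
  have hY_nonneg : 0 ≤ Y := (norm_nonneg _).trans (hY 0 M.zero_le)
  have norm_sub_le {n : ℕ} (hn : n < M) : ‖ζ (n + 2) - ζ n‖ ≤ 2 * (k * Y) := by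
    calc ‖ζ (n + 2) - ζ n‖ = k * ‖stepVelocity k ζ (n + 1) + stepVelocity k ζ n‖ := by
          rw [sub_eq_smul_stepVelocity_add hk.ne', norm_smul, Real.norm_of_nonneg hk.le]
      _ ≤ k * (Y + Y) := by gcongr; exact norm_add_le_of_le (hY _ hn) (hY _ hn.le)
      _ = 2 * (k * Y) := by ring
  calc ∑ n ∈ Finset.range j, r (n + 1) (ζ (n + 2) - ζ n)
      ≤ ∑ n ∈ Finset.range j, ρ (n + 1) * (2 * (k * Y)) := by
        refine Finset.sum_le_sum fun n hn => ?_
        have hnM : n < M := (Finset.mem_range.1 hn).trans_le hj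
        exact (le_abs_self _).trans <| (hr n hnM _).trans <|
          mul_le_mul_of_nonneg_left (norm_sub_le hnM) (hρ _)
    _ ≤ ∑ n ∈ Finset.range M, ρ (n + 1) * (2 * (k * Y)) :=
        Finset.sum_le_sum_of_subset_of_nonneg (Finset.range_mono hj)
          fun n _ _ => mul_nonneg (hρ _) (by positivity)
    _ = 2 * (Y * (k * ∑ n ∈ Finset.range M, ρ (n + 1))) := by rw [← Finset.sum_mul]; ring

lemma IsLeapfrogSolution.errorNormSq_le {ℓ r : ℕ → V →ₗ[ℝ] ℝ} {L : ℝ} {D ρ : ℕ → ℝ} {M m : ℕ}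
    (hζ : IsLeapfrogSolution a k (ℓ + r) M ζ) (hk : 0 < k) (hα : 0 < α)
    (ha : ∀ w v, a w v = a v w) (ha_coercive : ∀ w, α * p w ^ 2 ≤ a w w)
    (ha_bdd : ∀ w v, |a w v| ≤ β * p w * p v) (hcfl : ∀ v, k ^ 2 * a v v ≤ ‖v‖ ^ 2)
    (hL : 0 ≤ L) (hD : ∀ n, 0 ≤ D n) (hρ : ∀ n, 0 ≤ ρ n)
    (hℓ : ∀ n ≤ M, ∀ v, |ℓ n v| ≤ L * p v)
    (hℓ_sub : ∀ n < M, ∀ v, |(ℓ (n + 1) - ℓ n) v| ≤ D n * p v)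
    (hr : ∀ n < M, ∀ v, |r (n + 1) v| ≤ ρ (n + 1) * ‖v‖) (hm : m ≤ M) :
    errorNormSq p k ζ m ≤ 2 / min (3 / 4) α * (max 1 β * errorNormSq p k ζ 0
      + 2 / min (3 / 4) α * (2 * L + ∑ n ∈ Finset.range M, D n
          + k * ∑ n ∈ Finset.range M, ρ (n + 1)) ^ 2) := by
  obtain ⟨j, hj_mem, hj_max⟩ :=
    (Finset.range (M + 1)).exists_max_image (errorNormSq p k ζ) ⟨0, by simp⟩
  have hj : j ≤ M := Finset.mem_range_succ_iff.1 hj_mem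
  have le_max {n : ℕ} (hn : n ≤ M) : errorNormSq p k ζ n ≤ errorNormSq p k ζ j :=
    hj_max n (Finset.mem_range_succ_iff.2 hn)
  set Y := √(errorNormSq p k ζ j)
  have hY_sq : Y ^ 2 = errorNormSq p k ζ j := Real.sq_sqrt (errorNormSq_nonneg p k ζ j)
  have midpoint_le (n : ℕ) (hn : n ≤ M) : p (stepMidpoint ζ n) ≤ Y :=
    Real.le_sqrt_of_sq_le ((le_add_of_nonneg_left (sq_nonneg _)).trans (le_max hn))
  have velocity_le (n : ℕ) (hn : n ≤ M) : ‖stepVelocity k ζ n‖ ≤ Y :=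
    Real.le_sqrt_of_sq_le ((le_add_of_nonneg_right (sq_nonneg _)).trans (le_max hn))
  have energy_balance : leapfrogEnergy a k ζ j = leapfrogEnergy a k ζ 0
      + ∑ n ∈ Finset.range j, ℓ (n + 1) (ζ (n + 2) - ζ n)
      + ∑ n ∈ Finset.range j, r (n + 1) (ζ (n + 2) - ζ n) := by
    rw [hζ.leapfrogEnergy_eq_add_sum ha hj, add_assoc, ← Finset.sum_add_distrib]
    rfl
  have smoother_work_le := sum_apply_sub_le_of_seminorm_bound hj hL hD hℓ hℓ_sub midpoint_le
  have residual_work_le := sum_apply_sub_le_of_norm_bound hk hj hρ hr velocity_le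
  have energy_lower := min_mul_errorNormSq_le_leapfrogEnergy (ζ := ζ) ha hk.ne' ha_coercive hcfl j
  have energy_upper := leapfrogEnergy_le_max_mul_errorNormSq (ζ := ζ) ha hk.ne'
    (fun w => (by positivity : 0 ≤ α * p w ^ 2).trans (ha_coercive w)) ha_bdd 0
  refine (le_max hm).trans ?_
  rw [← hY_sq] at energy_lower ⊢
  exact sq_le_of_mul_sq_le_add_two_mul (lt_min (by norm_num) hα) (by linarith)

end Leapfrog

lemma abs_inner_apply_le_of_norm_apply_le {V H : Type*} [AddCommGroup V] [Module ℝ V]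
    [NormedAddCommGroup H] [InnerProductSpace ℝ H] {p : Seminorm ℝ V} {E : V →ₗ[ℝ] H} {c : ℝ}
    (hE : ∀ v, ‖E v‖ ≤ c * p v) {x : H} {B : ℝ} (hx : ‖x‖ ≤ B) (v : V) :
    |⟪x, E v⟫| ≤ c * B * p v := by
  have hB : 0 ≤ B := (norm_nonneg x).trans hx
  calc |⟪x, E v⟫| ≤ ‖x‖ * ‖E v‖ := abs_real_inner_le_norm _ _
    _ ≤ B * (c * p v) := by gcongr; exact hE v
    _ = c * B * p v := by ring

lemma errorNormSq_le_of_inner_load {H : Type*} [NormedAddCommGroup H] [InnerProductSpace ℝ H]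
    {V : Submodule ℝ H} {p : Seminorm ℝ V} {a : V →ₗ[ℝ] V →ₗ[ℝ] ℝ} {E : V →ₗ[ℝ] H}
    {α β k c B : ℝ} {x σ : ℕ → H} {ζ : ℕ → V} {M m : ℕ}
    (hk : 0 < k) (hα : 0 < α) (ha : ∀ w v, a w v = a v w)
    (ha_coercive : ∀ w, α * p w ^ 2 ≤ a w w) (ha_bdd : ∀ w v, |a w v| ≤ β * p w * p v)
    (hcfl : ∀ v, k ^ 2 * a v v ≤ ‖v‖ ^ 2) (hc : 0 ≤ c) (hE : ∀ v, ‖E v‖ ≤ c * p v)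
    (hx : ∀ n ≤ M, ‖x n‖ ≤ B)
    (hζ : ∀ n, 1 ≤ n → n ≤ M → ∀ v : V,
      ⟪(((k ^ 2)⁻¹ • (ζ (n + 1) - (2 : ℝ) • ζ n + ζ (n - 1)) : V) : H), (v : H)⟫ + a (ζ n) v
        = ⟪x n, E v⟫ + ⟪σ n, (v : H)⟫)
    (hm : m ≤ M) :
    errorNormSq p k ζ m ≤ 2 / min (3 / 4) α * (max 1 β * errorNormSq p k ζ 0
      + 2 / min (3 / 4) α * (2 * (c * B) + c * ∑ n ∈ Finset.range M, ‖x (n + 1) - x n‖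
          + k * ∑ n ∈ Finset.range M, ‖σ (n + 1)‖) ^ 2) := by
  let smootherLoad (n : ℕ) : V →ₗ[ℝ] ℝ := innerₗ H (x n) ∘ₗ E
  let residualLoad (n : ℕ) : V →ₗ[ℝ] ℝ := innerₗ H (σ n) ∘ₗ V.subtype
  have solution : IsLeapfrogSolution a k (smootherLoad + residualLoad) M ζ := fun n hn v =>
    hζ (n + 1) n.succ_pos hn v
  have smootherLoad_le (n : ℕ) (hn : n ≤ M) (v : V) : |smootherLoad n v| ≤ c * B * p v :=
    abs_inner_apply_le_of_norm_apply_le hE (hx n hn) v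
  have smootherLoad_sub_le (n : ℕ) (_ : n < M) (v : V) :
      |(smootherLoad (n + 1) - smootherLoad n) v| ≤ c * ‖x (n + 1) - x n‖ * p v := by
    have increment_apply : (smootherLoad (n + 1) - smootherLoad n) v = ⟪x (n + 1) - x n, E v⟫ :=
      (inner_sub_left _ _ _).symm
    rw [increment_apply]
    exact abs_inner_apply_le_of_norm_apply_le hE le_rfl v
  have residualLoad_le (n : ℕ) (_ : n < M) (v : V) : |residualLoad (n + 1) v| ≤ ‖σ (n + 1)‖ * ‖v‖ :=
    abs_real_inner_le_norm (σ (n + 1)) v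
  have hB : 0 ≤ B := (norm_nonneg _).trans (hx 0 M.zero_le)
  rw [Finset.mul_sum]
  exact solution.errorNormSq_le (D := fun n => c * ‖x (n + 1) - x n‖) (ρ := fun n => ‖σ n‖) hk hα ha
    ha_coercive ha_bdd hcfl (mul_nonneg hc hB) (fun n => by positivity) (fun n => norm_nonneg (σ n))
    smootherLoad_le smootherLoad_sub_le residualLoad_le hm

/-- The constant in the error estimate: `min (3 / 4) α` and `max 1 β` compare the leapfrog energy
with `errorNormSq`, and `3 * (C₁ ^ 2 * (4 + T) + T)` comes from squaring the data term. -/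
noncomputable def explicitSchemeConst (α β T C₁ : ℝ) : ℝ :=
  2 / min (3 / 4) α * (max 1 β + 2 / min (3 / 4) α * (3 * (C₁ ^ 2 * (4 + T) + T)))

lemma explicitSchemeConst_pos {α T : ℝ} (hα : 0 < α) (hT : 0 ≤ T) (β C₁ : ℝ) :
    0 < explicitSchemeConst α β T C₁ := by
  have : 0 < max 1 β := lt_max_of_lt_left one_pos
  rw [explicitSchemeConst]
  positivity

lemma le_explicitSchemeConst_mul {α β T C₁ X Q R : ℝ} (hα : 0 < α) (hT : 0 ≤ T) (hX : 0 ≤ X)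
    (hR : 0 ≤ R) (hQ : Q ≤ 3 * (C₁ ^ 2 * (4 + T) + T) * R) :
    2 / min (3 / 4) α * (max 1 β * X + 2 / min (3 / 4) α * Q)
      ≤ explicitSchemeConst α β T C₁ * (X + R) := by
  set γ := 2 / min (3 / 4) α
  set κ := 3 * (C₁ ^ 2 * (4 + T) + T)
  have hγ : 0 < γ := by positivity
  have hκ : 0 ≤ κ := by positivity
  have hβ : 0 < max 1 β := lt_max_of_lt_left one_pos
  calc γ * (max 1 β * X + γ * Q) ≤ γ * (max 1 β * X + γ * (κ * R)) := by gcongr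
    _ ≤ γ * (max 1 β * X + γ * (κ * R)) + γ * (γ * κ * X + max 1 β * R) :=
        le_add_of_nonneg_right (by positivity)
    _ = γ * (max 1 β + γ * κ) * (X + R) := by ring

lemma sq_data_le {C₁ T h k G J S I s : ℝ} (hT : 0 ≤ T) (hk : 0 ≤ k) (hG : 0 ≤ G) (hJ : 0 ≤ J)
    (hS : 0 ≤ S) (hI : I ^ 2 ≤ T * J) (hs : (k * s) ^ 2 ≤ T * (k * S)) :
    (2 * (C₁ * h ^ 2 * √G) + C₁ * h ^ 2 * I + k * s) ^ 2
      ≤ 3 * (C₁ ^ 2 * (4 + T) + T) * (h ^ 4 * (G + J) + k * S) := by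
  calc (2 * (C₁ * h ^ 2 * √G) + C₁ * h ^ 2 * I + k * s) ^ 2
      ≤ 3 * ((2 * (C₁ * h ^ 2 * √G)) ^ 2 + (C₁ * h ^ 2 * I) ^ 2 + (k * s) ^ 2) := by
        linarith [sq_nonneg (2 * (C₁ * h ^ 2 * √G) - C₁ * h ^ 2 * I),
          sq_nonneg (C₁ * h ^ 2 * I - k * s), sq_nonneg (2 * (C₁ * h ^ 2 * √G) - k * s)]
    _ = 3 * (4 * C₁ ^ 2 * h ^ 4 * √G ^ 2 + C₁ ^ 2 * h ^ 4 * I ^ 2 + (k * s) ^ 2) := by ring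
    _ ≤ 3 * (4 * C₁ ^ 2 * h ^ 4 * G + C₁ ^ 2 * h ^ 4 * (T * J) + T * (k * S)) := by
        rw [Real.sq_sqrt hG]; gcongr
    _ ≤ 3 * (C₁ ^ 2 * (4 + T) + T) * (h ^ 4 * (G + J) + k * S) := by
        rw [← sub_nonneg]
        ring_nf
        positivity

lemma sq_mul_sum_le {k T : ℝ} {M : ℕ} (hk : 0 ≤ k) (hM : M * k ≤ T) (ρ : ℕ → ℝ) :
    (k * ∑ n ∈ Finset.range M, ρ (n + 1)) ^ 2 ≤ T * (k * ∑ n ∈ Finset.Icc 1 M, ρ n ^ 2) := by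
  have reindex : ∑ n ∈ Finset.range M, ρ (n + 1) ^ 2 = ∑ n ∈ Finset.Icc 1 M, ρ n ^ 2 := by
    rw [Finset.range_eq_Ico, Finset.sum_Ico_add' (fun n => ρ n ^ 2)]
    rfl
  have cauchy_schwarz :=
    sq_sum_le_card_mul_sum_sq (s := Finset.range M) (f := fun n => ρ (n + 1))
  rw [reindex, Finset.card_range] at cauchy_schwarz
  calc (k * ∑ n ∈ Finset.range M, ρ (n + 1)) ^ 2
      ≤ k ^ 2 * (M * ∑ n ∈ Finset.Icc 1 M, ρ n ^ 2) := by rw [mul_pow]; gcongr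
    _ = M * k * (k * ∑ n ∈ Finset.Icc 1 M, ρ n ^ 2) := by ring
    _ ≤ T * (k * ∑ n ∈ Finset.Icc 1 M, ρ n ^ 2) := by gcongr

lemma sq_mul_sqrt_mul_le_one_of_cfl {β Cinv h k : ℝ} (hβ : 0 < β) (hCinv : 0 < Cinv) (hh : 0 < h)
    (hk : 0 ≤ k) (hcfl : k ≤ (√β)⁻¹ * Cinv⁻¹ * h ^ 2) : (k * √β * (Cinv / h ^ 2)) ^ 2 ≤ 1 := by
  refine pow_le_one₀ (by positivity) ?_
  calc k * √β * (Cinv / h ^ 2) ≤ (√β)⁻¹ * Cinv⁻¹ * h ^ 2 * √β * (Cinv / h ^ 2) := by gcongr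
    _ = 1 := by field_simp

theorem explicit_scheme_error_general {α β T C₁ h Cinv k : ℝ} (hα : 0 < α) (hβ : 0 < β)
    (hT : 0 < T) (hC₁ : 0 ≤ C₁) {H : Type*} [NormedAddCommGroup H] [InnerProductSpace ℝ H]
    {V : Submodule ℝ H} {Nh : Seminorm ℝ V} {a : V →ₗ[ℝ] V →ₗ[ℝ] ℝ}
    (ha : ∀ w v : V, a w v = a v w) (ha_coercive : ∀ w : V, α * Nh w ^ 2 ≤ a w w)
    (ha_bdd : ∀ w v : V, |a w v| ≤ β * Nh w * Nh v) (hh : 0 < h) (hCinv : 0 < Cinv)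
    (hinv : ∀ v : V, Nh v ≤ Cinv / h ^ 2 * ‖v‖) {E : V →ₗ[ℝ] H}
    (hE : ∀ v : V, ‖E v‖ ≤ C₁ * h ^ 2 * Nh v) {N : ℕ} (hk : k = T / N)
    (hcfl : k ≤ (√β)⁻¹ * Cinv⁻¹ * h ^ 2) {g g' : ℝ → H}
    (hg : ∀ t ∈ Set.Icc (0 : ℝ) T, HasDerivWithinAt g (g' t) (Set.Icc (0 : ℝ) T) t)
    (hg' : ContinuousOn g' (Set.Icc (0 : ℝ) T)) {σ : ℕ → H} {ζ : ℕ → V}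
    (hζ : ∀ n, 1 ≤ n → n ≤ N - 1 → ∀ v : V,
      ⟪(((k ^ 2)⁻¹ • (ζ (n + 1) - (2 : ℝ) • ζ n + ζ (n - 1)) : V) : H), (v : H)⟫ + a (ζ n) v
        = ⟪g ((n : ℝ) * k), E v⟫ + ⟪σ n, (v : H)⟫)
    {m : ℕ} (hm : m < N) :
    errorNormSq Nh k ζ m ≤ explicitSchemeConst α β T C₁ * (errorNormSq Nh k ζ 0
      + h ^ 4 * ((⨆ s : Set.Icc (0 : ℝ) T, ‖g ↑s‖ ^ 2) + ∫ s in (0 : ℝ)..T, ‖g' s‖ ^ 2)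
      + k * ∑ n ∈ Finset.Icc 1 (N - 1), ‖σ n‖ ^ 2) := by
  have hN : (0 : ℝ) < N := by exact_mod_cast m.zero_le.trans_lt hm
  have hk_pos : 0 < k := hk ▸ div_pos hT hN
  have grid_le {n : ℕ} (hn : n ≤ N - 1) : n * k ≤ T := by
    calc n * k ≤ N * k := by gcongr; exact hn.trans (N.sub_le 1)
      _ = T := by rw [hk]; field_simp
  set G := ⨆ s : Set.Icc (0 : ℝ) T, ‖g ↑s‖ ^ 2
  set J := ∫ s in (0 : ℝ)..T, ‖g' s‖ ^ 2
  set S := ∑ n ∈ Finset.Icc 1 (N - 1), ‖σ n‖ ^ 2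
  have hG : 0 ≤ G := Real.iSup_nonneg fun _ => sq_nonneg _
  have hJ : 0 ≤ J := intervalIntegral.integral_nonneg hT.le fun _ _ => sq_nonneg _
  have hS : 0 ≤ S := Finset.sum_nonneg fun _ _ => sq_nonneg _
  have norm_grid_le (n : ℕ) (hn : n ≤ N - 1) : ‖g (n * k)‖ ≤ √G :=
    Real.le_sqrt_of_sq_le <| le_iSup_subtype_of_continuousOn isCompact_Icc
      (ContinuousOn.pow (ContinuousOn.norm fun t ht => (hg t ht).continuousWithinAt) 2)
      ⟨by positivity, grid_le hn⟩
  have increments_sq_le :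
      (∑ n ∈ Finset.range (N - 1), ‖g ((n + 1 : ℕ) * k) - g (n * k)‖) ^ 2 ≤ T * J := by
    simpa only [sub_zero] using sq_sum_norm_sub_le hg hg' (t := fun n => n * k)
      (fun n n' hn => by dsimp only; gcongr) (by simp) (grid_le le_rfl)
  have stability := errorNormSq_le_of_inner_load (x := fun n => g (n * k)) hk_pos hα ha ha_coercive
    ha_bdd (sq_mul_le_norm_sq_of_inverse_inequality hk_pos.le hβ.le ha_bdd hinv
      (sq_mul_sqrt_mul_le_one_of_cfl hβ hCinv hh hk_pos.le hcfl))
    (by positivity) hE norm_grid_le hζ (Nat.le_sub_one_of_lt hm)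
  have data_sq_le := sq_data_le (C₁ := C₁) (h := h) hT.le hk_pos.le hG hJ hS increments_sq_le
    (sq_mul_sum_le hk_pos.le (grid_le le_rfl) fun n => ‖σ n‖)
  rw [add_assoc]
  exact stability.trans (le_explicitSchemeConst_mul hα hT.le (errorNormSq_nonneg _ _ _ _)
    (by positivity) data_sq_le)

/-- Error estimate for the explicit fully discrete scheme under the CFL condition. -/
theorem explicit_scheme_error (α β T C₁ : ℝ) (hα : 0 < α) (hαβ : α ≤ β) (hT : 0 < T)
    (hC₁ : 0 < C₁) :
    ∃ C > 0,
      ∀ (H : Type) [NormedAddCommGroup H] [InnerProductSpace ℝ H] [CompleteSpace H]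
        (V : Submodule ℝ H) (Nh : Seminorm ℝ V) (a : V →ₗ[ℝ] V →ₗ[ℝ] ℝ),
        (∀ w v : V, a w v = a v w) →
        (∀ w : V, α * Nh w ^ 2 ≤ a w w) →
        (∀ w v : V, |a w v| ≤ β * Nh w * Nh v) →
        ∀ (h Cinv : ℝ), 0 < h → 0 < Cinv →
          (∀ v : V, Nh v ≤ Cinv / h ^ 2 * ‖v‖) →
          ∀ (E : V →ₗ[ℝ] H), (∀ v : V, ‖E v‖ ≤ C₁ * h ^ 2 * Nh v) →
            ∀ (N : ℕ) (hN : 2 ≤ N) (k : ℝ), k = T / N →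
              k ≤ (Real.sqrt β)⁻¹ * Cinv⁻¹ * h ^ 2 →
              ∀ (g g' : ℝ → H),
                (∀ t ∈ Set.Icc (0 : ℝ) T, HasDerivWithinAt g (g' t) (Set.Icc (0 : ℝ) T) t) →
                ContinuousOn g' (Set.Icc (0 : ℝ) T) →
                ∀ (σ : ℕ → H) (ζ : ℕ → V),
                  (∀ n, 1 ≤ n → n ≤ N - 1 → ∀ v : V,
                    ⟪(((k ^ 2)⁻¹ • (ζ (n + 1) - (2 : ℝ) • ζ n + ζ (n - 1)) : V) : H),
                        (v : H)⟫ + a (ζ n) v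
                      = ⟪g ((n : ℝ) * k), E v⟫ + ⟪σ n, (v : H)⟫) →
                  ∀ m, 1 ≤ m → m ≤ N - 1 →
                    ‖(k⁻¹ • (ζ (m + 1) - ζ m) : V)‖ ^ 2
                        + Nh ((1 / 2 : ℝ) • (ζ (m + 1) + ζ m)) ^ 2
                      ≤ C * (‖(k⁻¹ • (ζ 1 - ζ 0) : V)‖ ^ 2
                          + Nh ((1 / 2 : ℝ) • (ζ 1 + ζ 0)) ^ 2
                          + h ^ 4 * ((⨆ s : Set.Icc (0 : ℝ) T, ‖g ↑s‖ ^ 2)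
                              + ∫ s in (0 : ℝ)..T, ‖g' s‖ ^ 2)
                          + k * ∑ n ∈ Finset.Icc 1 (N - 1), ‖σ n‖ ^ 2) :=
  ⟨explicitSchemeConst α β T C₁, explicitSchemeConst_pos hα hT.le β C₁,
    fun _ _ _ _ _ _ _ ha ha_coercive ha_bdd _ _ hh hCinv hinv _ hE _ _ _ hk hcfl _ _ hg hg' _ _ hζ
        _ _ hm =>
      explicit_scheme_error_general hα (hα.trans_le hαβ) hT hC₁.le ha ha_coercive ha_bdd hh hCinv
        hinv hE hk hcfl hg hg' hζ (by lia)⟩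
end
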